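/- Let n, r ∈ ℂ with n ≠ 0, n − r + 1 ≠ 0, and r not a nonpositive integer. Define y(x) = (1/(n(n−r+1)))·( −(r−1)²/4 + ( n·x − (r−1)/2 + (n(n+1)x(x−1)/r)·F(n+1, n+2, r+1, x)/F(n, n+1, r, x) )² ). Let U ⊆ ℂ be an open subset of the unit disc {|x| < 1} on which x ≠ 0, x ≠ 1, F(n, n+1, r, x) ≠ 0, and y(x) ∉ {0, 1, x}. Then y solves P_VI(0, −(r−1)²/2, (2n−r+1)²/2, 0) on U. -/

import Mathlib

/-- `y` solves the Painlevé VI equation with parameters `(α, β, γ, δ)` on `U`: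
`y` is twice differentiable on `U`, and at every `x ∈ U` we have `x ≠ 0`, `x ≠ 1`,
`y x ∉ {0, 1, x}` and the Painlevé VI equation holds. -/
def SolvesPVI (α β γ δ : ℂ) (U : Set ℂ) (y : ℂ → ℂ) : Prop :=
  (∀ x ∈ U, DifferentiableAt ℂ y x) ∧
  (∀ x ∈ U, DifferentiableAt ℂ (deriv y) x) ∧
  ∀ x ∈ U, x ≠ 0 ∧ x ≠ 1 ∧ y x ≠ 0 ∧ y x ≠ 1 ∧ y x ≠ x ∧
    deriv (deriv y) x =
      (1 / 2) * (1 / y x + 1 / (y x - 1) + 1 / (y x - x)) * (deriv y x) ^ 2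
        - (1 / x + 1 / (x - 1) + 1 / (y x - x)) * deriv y x
        + (y x * (y x - 1) * (y x - x) / (x ^ 2 * (x - 1) ^ 2)) *
            (α + β * x / (y x) ^ 2 + γ * (x - 1) / (y x - 1) ^ 2
              + δ * x * (x - 1) / (y x - x) ^ 2)

/-- The Gauss hypergeometric series `F(a, b, c, x) = Σ (a)ₙ(b)ₙ/(c)ₙ · xⁿ/n!`,
where `(a)ₙ` is the ascending Pochhammer symbol. -/
noncomputable def hypF (a b c x : ℂ) : ℂ :=
  ∑' n : ℕ,
    ((ascPochhammer ℂ n).eval a * (ascPochhammer ℂ n).eval b / (ascPochhammer ℂ n).eval c)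
      * x ^ n / (n.factorial : ℂ)

/-- The solution of Theorem 2. -/
noncomputable def yThm2 (n r : ℂ) : ℂ → ℂ := fun x =>
  (1 / (n * (n - r + 1))) *
    (-(r - 1) ^ 2 / 4 +
      (n * x - (r - 1) / 2 +
        (n * (n + 1) * x * (x - 1) / r) * hypF (n + 1) (n + 2) (r + 1) x
          / hypF n (n + 1) r x) ^ 2)

/-!
If `f` solves the hypergeometric equation with parameters `a, b, c`, then, for suitable constants
`λ` and `μ`, the function `w = λx + μ + x(x - 1) f'/f` solves the Riccati equation
`x(x - 1) w' = Q(x) - w²` with `Q` a quadratic polynomial whose leading coefficient is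
`((a - b)² - 1)/4`. For `(a, b, c) = (n, n + 1, r)` this coefficient vanishes and
`Q = κx + p²` with `κ = n(n - r + 1)` and `p = (r - 1)/2`. Hence `y = (w² - p²)/κ` satisfies
`x(x - 1) w' = κ(x - y)` and `x(x - 1) y' = 2w(x - y)`. Differentiating the second relation and
eliminating `w` by `w² = κy + p² = κ(y - 1) + (p² + κ)` gives Painlevé VI with
`(α, β, γ, δ) = (0, -2p², 2(p² + κ), 0)`.
-/

open Metric FormalMultilinearSeries
open scoped Topology

section PowerSeries

theorem hasSum_pow_mul_of_shift {R : Type*} [Ring R] [TopologicalSpace R] [IsTopologicalRing R]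
    {v : ℕ → R} {x s : R} (hv : v 0 = 0) (h : HasSum (fun k ↦ x ^ k * v (k + 1)) s) :
    HasSum (fun k ↦ x ^ k * v k) (x * s) := by
  rw [← hasSum_nat_add_iff' 1]
  simpa [hv, pow_succ', mul_assoc] using h.mul_left x

theorem hasSum_deriv_of_hasFPowerSeriesOnBall {𝕜 F : Type*} [NontriviallyNormedField 𝕜]
    [NormedAddCommGroup F] [NormedSpace 𝕜 F] [CompleteSpace F] {f : 𝕜 → F}
    {p : FormalMultilinearSeries 𝕜 𝕜 F} {x y : 𝕜} {r : ENNReal}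
    (hf : HasFPowerSeriesOnBall f p x r) (hy : y ∈ eball 0 r) :
    HasSum (fun k : ℕ ↦ y ^ k • (k + 1) • p.coeff (k + 1)) (deriv f (x + y)) := by
  have h := (hf.fderiv.hasSum hy).mapL (ContinuousLinearMap.apply 𝕜 F (1 : 𝕜))
  simpa [← derivSeries_coeff_one, apply_eq_pow_smul_coeff] using h

end PowerSeries

section HypergeometricCoefficient

variable {𝕂 : Type*} [Field 𝕂]

theorem ascPochhammer_succ_eval_left (a : 𝕂) (k : ℕ) :
    (ascPochhammer 𝕂 (k + 1)).eval a = a * (ascPochhammer 𝕂 k).eval (a + 1) := by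
  simp [ascPochhammer_succ_left]

variable [CharZero 𝕂] (a b c : 𝕂) (k : ℕ)

theorem succ_mul_ordinaryHypergeometricCoefficient_succ :
    (k + 1) * ordinaryHypergeometricCoefficient a b c (k + 1) =
      a * b / c * ordinaryHypergeometricCoefficient (a + 1) (b + 1) (c + 1) k := by
  have hk : (k + 1 : 𝕂) ≠ 0 := k.cast_add_one_ne_zero
  simp only [ordinaryHypergeometricCoefficient, ascPochhammer_succ_eval_left, Nat.factorial_succ,
    Nat.cast_mul, Nat.cast_succ, mul_inv]
  field_simp

variable {c k} in
theorem ordinaryHypergeometricCoefficient_recurrence (hc : c + k ≠ 0) :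
    (c + k) * ((k + 1) * ordinaryHypergeometricCoefficient a b c (k + 1)) =
      (a + k) * (b + k) * ordinaryHypergeometricCoefficient a b c k := by
  have hk : (k + 1 : 𝕂) ≠ 0 := k.cast_add_one_ne_zero
  simp only [ordinaryHypergeometricCoefficient, ascPochhammer_succ_eval, Nat.factorial_succ,
    Nat.cast_mul, Nat.cast_succ, mul_inv]
  field_simp

end HypergeometricCoefficient

section Hypergeometric

variable {𝕂 : Type*} [RCLike 𝕂] (a b c : 𝕂) {x : 𝕂}

theorem one_le_ordinaryHypergeometricSeries_radius :
    1 ≤ (ordinaryHypergeometricSeries 𝕂 a b c).radius := by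
  by_cases h : ∀ k : ℕ, (k : 𝕂) ≠ -a ∧ (k : 𝕂) ≠ -b ∧ (k : 𝕂) ≠ -c
  · exact (ordinaryHypergeometricSeries_radius_eq_one 𝕂 a b c h).ge
  · simp only [not_forall, not_and_or, not_not, eq_comm (a := Nat.cast _), neg_eq_iff_eq_neg] at h
    obtain ⟨k, rfl | rfl | rfl⟩ := h
    · simp [ordinaryHypergeometric_radius_top_of_neg_nat₁]
    · simp [ordinaryHypergeometric_radius_top_of_neg_nat₂]
    · simp [ordinaryHypergeometric_radius_top_of_neg_nat₃]

theorem hasFPowerSeriesOnBall_ordinaryHypergeometric :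
    HasFPowerSeriesOnBall (₂F₁ a b c) (ordinaryHypergeometricSeries 𝕂 a b c) 0 1 :=
  have hradius := one_le_ordinaryHypergeometricSeries_radius a b c
  ((ordinaryHypergeometricSeries 𝕂 a b c).hasFPowerSeriesOnBall
    (one_pos.trans_le hradius)).mono one_pos hradius

theorem analyticAt_ordinaryHypergeometric (hx : ‖x‖ < 1) : AnalyticAt 𝕂 (₂F₁ a b c) x :=
  (hasFPowerSeriesOnBall_ordinaryHypergeometric a b c).analyticAt_of_mem
    (by simpa [← ofReal_norm] using hx)

theorem hasSum_ordinaryHypergeometric (hx : ‖x‖ < 1) :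
    HasSum (fun k ↦ x ^ k * ordinaryHypergeometricCoefficient a b c k) (₂F₁ a b c x) := by
  have h := (hasFPowerSeriesOnBall_ordinaryHypergeometric a b c).hasSum (y := x)
    (by simpa [← ofReal_norm] using hx)
  simpa [ordinaryHypergeometricSeries, mul_comm] using h

theorem hasSum_deriv_ordinaryHypergeometric (hx : ‖x‖ < 1) :
    HasSum (fun k : ℕ ↦ x ^ k * ((k + 1) * ordinaryHypergeometricCoefficient a b c (k + 1)))
      (deriv (₂F₁ a b c) x) := by
  have h := hasSum_deriv_of_hasFPowerSeriesOnBall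
    (hasFPowerSeriesOnBall_ordinaryHypergeometric a b c) (y := x)
    (by simpa [← ofReal_norm] using hx)
  simpa [ordinaryHypergeometricSeries, coeff_ofScalars] using h

theorem deriv_ordinaryHypergeometric (hx : ‖x‖ < 1) :
    deriv (₂F₁ a b c) x = a * b / c * ₂F₁ (a + 1) (b + 1) (c + 1) x := by
  refine (hasSum_deriv_ordinaryHypergeometric a b c hx).unique ?_
  simpa only [succ_mul_ordinaryHypergeometricCoefficient_succ, mul_left_comm] using
    (hasSum_ordinaryHypergeometric (a + 1) (b + 1) (c + 1) hx).mul_left (a * b / c)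

theorem hasSum_deriv_deriv_ordinaryHypergeometric (hx : ‖x‖ < 1) :
    HasSum (fun k : ℕ ↦ x ^ k *
        ((k + 1) * ((k + 2) * ordinaryHypergeometricCoefficient a b c (k + 2))))
      (deriv (deriv (₂F₁ a b c)) x) := by
  have hball : ball (0 : 𝕂) 1 ∈ 𝓝 x := isOpen_ball.mem_nhds (by simpa using hx)
  have hderiv : deriv (₂F₁ a b c) =ᶠ[𝓝 x]
      fun z ↦ a * b / c * ₂F₁ (a + 1) (b + 1) (c + 1) z := by
    filter_upwards [hball] with z hz
    exact deriv_ordinaryHypergeometric a b c (by simpa using hz)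
  rw [hderiv.deriv_eq, deriv_const_mul_field]
  convert! (hasSum_deriv_ordinaryHypergeometric (a + 1) (b + 1) (c + 1) hx).mul_left (a * b / c)
    using 2 with k
  have h := succ_mul_ordinaryHypergeometricCoefficient_succ a b c (k + 1)
  push_cast at h
  linear_combination x ^ k * (k + 1) * h

variable {c} in
theorem ordinaryHypergeometric_ode (hc : ∀ m : ℕ, c ≠ -m) (hx : ‖x‖ < 1) :
    x * (1 - x) * deriv (deriv (₂F₁ a b c)) x + (c - (a + b + 1) * x) * deriv (₂F₁ a b c) x -
      a * b * ₂F₁ a b c x = 0 := by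
  set u := ordinaryHypergeometricCoefficient a b c
  have hF : HasSum (fun k ↦ x ^ k * u k) (₂F₁ a b c x) := hasSum_ordinaryHypergeometric a b c hx
  have hF' : HasSum (fun k : ℕ ↦ x ^ k * ((k + 1) * u (k + 1))) (deriv (₂F₁ a b c) x) :=
    hasSum_deriv_ordinaryHypergeometric a b c hx
  have hF'' : HasSum (fun k : ℕ ↦ x ^ k * ((k + 1) * ((k + 2) * u (k + 2))))
      (deriv (deriv (₂F₁ a b c)) x) := hasSum_deriv_deriv_ordinaryHypergeometric a b c hx
  have hxF' : HasSum (fun k : ℕ ↦ x ^ k * (k * u k)) (x * deriv (₂F₁ a b c) x) :=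
    hasSum_pow_mul_of_shift (v := fun k ↦ k * u k) (by simp) (by simpa using hF')
  have hxF'' : HasSum (fun k : ℕ ↦ x ^ k * (k * ((k + 1) * u (k + 1))))
      (x * deriv (deriv (₂F₁ a b c)) x) :=
    hasSum_pow_mul_of_shift (v := fun k ↦ k * ((k + 1) * u (k + 1))) (by simp)
      (by simpa [add_assoc, one_add_one_eq_two] using hF'')
  have hxxF'' : HasSum (fun k : ℕ ↦ x ^ k * (k * ((k - 1) * u k)))
      (x * (x * deriv (deriv (₂F₁ a b c)) x)) :=
    hasSum_pow_mul_of_shift (v := fun k ↦ k * ((k - 1) * u k)) (by simp)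
      (by simpa [mul_left_comm] using hxF'')
  have hcoeff (k : ℕ) : x ^ k * (k * ((k + 1) * u (k + 1))) - x ^ k * (k * ((k - 1) * u k)) +
      c * (x ^ k * ((k + 1) * u (k + 1))) - (a + b + 1) * (x ^ k * (k * u k)) -
      a * b * (x ^ k * u k) = 0 := by
    have hck : c + k ≠ 0 := fun h ↦ hc k (eq_neg_of_add_eq_zero_left h)
    linear_combination x ^ k * ordinaryHypergeometricCoefficient_recurrence a b hck
  have hsum := (((hxF''.sub hxxF'').add (hF'.mul_left c)).sub (hxF'.mul_left (a + b + 1))).sub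
    (hF.mul_left (a * b))
  simp only [hcoeff] at hsum
  linear_combination hsum.unique hasSum_zero

end Hypergeometric

section Riccati

variable {𝕜 : Type*} [NontriviallyNormedField 𝕜]

/-- The Riccati variable `w = λx + μ + x(x - 1) f'/f` of a solution `f` of the hypergeometric
equation with parameters `a, b, c`, where `λ = (a + b - 1)/2` and `μ = -(c - 1)/2` are chosen so
that the equation for `w` has no term linear in `w`. -/
noncomputable def hypergeometricRiccati (a b c : 𝕜) (f : 𝕜 → 𝕜) (x : 𝕜) : 𝕜 :=
  (a + b - 1) / 2 * x - (c - 1) / 2 + x * (x - 1) * logDeriv f x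

theorem hasDerivAt_mul_sub_one (x : 𝕜) : HasDerivAt (fun z ↦ z * (z - 1)) (2 * x - 1) x := by
  convert! (hasDerivAt_id' x).mul ((hasDerivAt_id' x).sub_const 1) using 1
  ring

theorem hasDerivAt_logDeriv {f : 𝕜 → 𝕜} {x : 𝕜} (hf : DifferentiableAt 𝕜 f x)
    (hf' : DifferentiableAt 𝕜 (deriv f) x) (hfx : f x ≠ 0) :
    HasDerivAt (logDeriv f) (deriv (deriv f) x / f x - logDeriv f x ^ 2) x := by
  convert! hf'.hasDerivAt.div hf.hasDerivAt hfx using 1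
  rw [logDeriv_apply]
  field_simp

theorem hasDerivAt_hypergeometricRiccati [NeZero (2 : 𝕜)] {a b c : 𝕜} {f : 𝕜 → 𝕜} {x : 𝕜}
    (hf : DifferentiableAt 𝕜 f x) (hf' : DifferentiableAt 𝕜 (deriv f) x) (hfx : f x ≠ 0)
    (hode : x * (1 - x) * deriv (deriv f) x + (c - (a + b + 1) * x) * deriv f x - a * b * f x = 0)
    (hx0 : x ≠ 0) (hx1 : x ≠ 1) :
    HasDerivAt (hypergeometricRiccati a b c f)
      ((((a - b) ^ 2 - 1) / 4 * x ^ 2 + (a * b - (a + b - 1) * c / 2) * x + (c - 1) ^ 2 / 4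
        - hypergeometricRiccati a b c f x ^ 2) / (x * (x - 1))) x := by
  have hx1' : x - 1 ≠ 0 := sub_ne_zero.2 hx1
  have h2 : (2 : 𝕜) ≠ 0 := NeZero.ne 2
  have h4 : (4 : 𝕜) = 2 ^ 2 := by norm_num
  have hf'' : x * (x - 1) * (deriv (deriv f) x / f x) =
      (c - (a + b + 1) * x) * logDeriv f x - a * b := by
    rw [logDeriv_apply]
    field_simp
    linear_combination -hode
  convert! (((hasDerivAt_id' x).const_mul ((a + b - 1) / 2)).sub_const ((c - 1) / 2)).add
    ((hasDerivAt_mul_sub_one x).mul (hasDerivAt_logDeriv hf hf' hfx)) using 1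
  rw [mul_sub (x * (x - 1)), hf'', div_eq_iff (mul_ne_zero hx0 hx1'), hypergeometricRiccati, h4]
  field_simp
  ring

end Riccati

section PainleveVI

section

variable {𝕜 : Type*} [NontriviallyNormedField 𝕜] {κ x : 𝕜} {w y : 𝕜 → 𝕜}

theorem hasDerivAt_of_sq_eq {q w' : 𝕜} (hκ : κ ≠ 0) (hw : HasDerivAt w w' x)
    (hwy : ∀ᶠ z in 𝓝 x, w z ^ 2 = κ * y z + q) : HasDerivAt y (2 * w x * w' / κ) x := by
  have hy : y =ᶠ[𝓝 x] fun z ↦ (w z ^ 2 - q) / κ := by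
    filter_upwards [hwy] with z hz
    rw [eq_div_iff hκ, hz]
    ring
  refine HasDerivAt.congr_of_eventuallyEq ?_ hy
  simpa using ((hw.fun_pow 2).sub_const q).div_const κ

theorem hasDerivAt_deriv_of_riccati (hx0 : x ≠ 0) (hx1 : x ≠ 1) (hyx : y x ≠ x)
    (hw : HasDerivAt w (κ * (x - y x) / (x * (x - 1))) x)
    (hy : ∀ᶠ z in 𝓝 x, HasDerivAt y (2 * w z * (z - y z) / (z * (z - 1))) z) :
    HasDerivAt (deriv y)
      (deriv y x ^ 2 / (y x - x) - (1 / x + 1 / (x - 1) + 1 / (y x - x)) * deriv y x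
        + 2 * κ * (y x - x) ^ 2 / (x ^ 2 * (x - 1) ^ 2)) x := by
  have hx1' : x - 1 ≠ 0 := sub_ne_zero.2 hx1
  have hyx' : y x - x ≠ 0 := sub_ne_zero.2 hyx
  have hy' : deriv y =ᶠ[𝓝 x] fun z ↦ 2 * w z * (z - y z) / (z * (z - 1)) :=
    hy.mono fun _ hz ↦ hz.deriv
  refine HasDerivAt.congr_of_eventuallyEq ?_ hy'
  convert! ((hw.const_mul 2).mul ((hasDerivAt_id' x).sub hy.self_of_nhds)).div
    (hasDerivAt_mul_sub_one x) (mul_ne_zero hx0 hx1') using 1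
  rw [hy'.self_of_nhds]
  simp only [Pi.mul_apply, Pi.sub_apply]
  field_simp
  ring

theorem painleveVI_identity_of_sq_eq {p W Y : 𝕜} (hY0 : Y ≠ 0) (hY1 : Y ≠ 1)
    (hW : W ^ 2 = κ * Y + p ^ 2) :
    2 * W ^ 2 * (1 - (Y - x) / Y - (Y - x) / (Y - 1)) + 2 * κ * (Y - x) =
      Y * (Y - 1) *
        (-2 * p ^ 2 * x / Y ^ 2 + 2 * (p ^ 2 + κ) * (x - 1) / (Y - 1) ^ 2) := by
  have hY1' : Y - 1 ≠ 0 := sub_ne_zero.2 hY1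
  have hp : p ^ 2 = W ^ 2 - κ * Y := by linear_combination -hW
  have hpκ : p ^ 2 + κ = W ^ 2 - κ * (Y - 1) := by linear_combination -hW
  rw [hpκ, hp]
  field_simp
  ring

end

theorem solvesPVI_of_riccati {κ p : ℂ} {U : Set ℂ} {w y : ℂ → ℂ} (hκ : κ ≠ 0) (hU : IsOpen U)
    (hreg : ∀ x ∈ U, x ≠ 0 ∧ x ≠ 1 ∧ y x ≠ 0 ∧ y x ≠ 1 ∧ y x ≠ x)
    (hw : ∀ x ∈ U, HasDerivAt w (κ * (x - y x) / (x * (x - 1))) x)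
    (hwy : ∀ x ∈ U, w x ^ 2 = κ * y x + p ^ 2) :
    SolvesPVI 0 (-2 * p ^ 2) (2 * (p ^ 2 + κ)) 0 U y := by
  have hy (x : ℂ) (hx : x ∈ U) : HasDerivAt y (2 * w x * (x - y x) / (x * (x - 1))) x := by
    convert! hasDerivAt_of_sq_eq hκ (hw x hx) (hU.eventually_mem hx |>.mono hwy) using 1
    field_simp
  have hy' (x : ℂ) (hx : x ∈ U) :=
    have ⟨hx0, hx1, _, _, hyx⟩ := hreg x hx
    hasDerivAt_deriv_of_riccati hx0 hx1 hyx (hw x hx) (hU.eventually_mem hx |>.mono hy)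
  refine ⟨fun x hx ↦ (hy x hx).differentiableAt, fun x hx ↦ (hy' x hx).differentiableAt,
    fun x hx ↦ ?_⟩
  obtain ⟨hx0, hx1, hy0, hy1, hyx⟩ := hreg x hx
  refine ⟨hx0, hx1, hy0, hy1, hyx, ?_⟩
  have hy'sq : deriv y x ^ 2 * (1 / (y x - x) - 1 / y x - 1 / (y x - 1)) =
      4 * w x ^ 2 * (1 - (y x - x) / y x - (y x - x) / (y x - 1)) * (y x - x) /
        (x ^ 2 * (x - 1) ^ 2) := by
    have hyx' : y x - x ≠ 0 := sub_ne_zero.2 hyx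
    rw [(hy x hx).deriv]
    field_simp
    ring
  have hidentity := painleveVI_identity_of_sq_eq (x := x) hy0 hy1 (hwy x hx)
  rw [(hy' x hx).deriv]
  linear_combination (1 / 2) * hy'sq + (y x - x) / (x ^ 2 * (x - 1) ^ 2) * hidentity

end PainleveVI

section HypergeometricSolution

variable {n r x : ℂ}

theorem hypF_eq_ordinaryHypergeometric (a b c : ℂ) : hypF a b c = ₂F₁ a b c := by
  simp only [ordinaryHypergeometric_eq_tsum, smul_eq_mul, funext_iff, hypF]
  exact fun x ↦ tsum_congr fun k ↦ by ring

theorem hypergeometricRiccati_sq_eq_yThm2 (hκ : n * (n - r + 1) ≠ 0) (hx : ‖x‖ < 1) :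
    hypergeometricRiccati n (n + 1) r (₂F₁ n (n + 1) r) x ^ 2 =
      n * (n - r + 1) * yThm2 n r x + ((r - 1) / 2) ^ 2 := by
  have hw : hypergeometricRiccati n (n + 1) r (₂F₁ n (n + 1) r) x =
      n * x - (r - 1) / 2 + (n * (n + 1) * x * (x - 1) / r) * hypF (n + 1) (n + 2) (r + 1) x
          / hypF n (n + 1) r x := by
    rw [hypergeometricRiccati, logDeriv_apply, deriv_ordinaryHypergeometric _ _ _ hx,
      add_assoc n, one_add_one_eq_two]
    simp only [hypF_eq_ordinaryHypergeometric]
    ring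
  rw [yThm2, ← hw, one_div, mul_inv_cancel_left₀ hκ]
  ring

theorem hasDerivAt_hypergeometricRiccati_yThm2 (hκ : n * (n - r + 1) ≠ 0)
    (hr : ∀ m : ℕ, r ≠ -m) (hx : ‖x‖ < 1) (hx0 : x ≠ 0) (hF : hypF n (n + 1) r x ≠ 0) :
    HasDerivAt (hypergeometricRiccati n (n + 1) r (₂F₁ n (n + 1) r))
      (n * (n - r + 1) * (x - yThm2 n r x) / (x * (x - 1))) x := by
  have hx1 : x ≠ 1 := by rintro rfl; simp at hx
  have hanalytic := analyticAt_ordinaryHypergeometric n (n + 1) r hx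
  have h := hasDerivAt_hypergeometricRiccati hanalytic.differentiableAt
    hanalytic.deriv.differentiableAt (by rwa [← hypF_eq_ordinaryHypergeometric])
    (ordinaryHypergeometric_ode n (n + 1) hr hx) hx0 hx1
  convert! h using 2
  linear_combination hypergeometricRiccati_sq_eq_yThm2 hκ hx

end HypergeometricSolution

/-- **Theorem 2:** `y(n, r)` solves `P_VI(0, -(r-1)²/2, (2n-r+1)²/2, 0)`. -/
theorem yThm2_solves_painleveVI (n r : ℂ) (hn : n ≠ 0) (hnr : n - r + 1 ≠ 0)
    (hr : ∀ m : ℕ, r ≠ -(m : ℂ))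
    (U : Set ℂ) (hU : IsOpen U) (hUball : U ⊆ Metric.ball (0 : ℂ) 1)
    (hreg : ∀ x ∈ U, x ≠ 0 ∧ x ≠ 1 ∧ hypF n (n + 1) r x ≠ 0 ∧
      yThm2 n r x ≠ 0 ∧ yThm2 n r x ≠ 1 ∧ yThm2 n r x ≠ x) :
    SolvesPVI 0 (-(r - 1) ^ 2 / 2) ((2 * n - r + 1) ^ 2 / 2) 0 U (yThm2 n r) := by
  have hball (x : ℂ) (hx : x ∈ U) : ‖x‖ < 1 := by simpa using hUball hx
  have hκ : n * (n - r + 1) ≠ 0 := mul_ne_zero hn hnr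
  have hPVI : SolvesPVI 0 (-2 * ((r - 1) / 2) ^ 2)
      (2 * (((r - 1) / 2) ^ 2 + n * (n - r + 1))) 0 U (yThm2 n r) := by
    refine solvesPVI_of_riccati hκ hU (fun x hx ↦ ?_) (fun x hx ↦ ?_)
      fun x hx ↦ hypergeometricRiccati_sq_eq_yThm2 hκ (hball x hx)
    · obtain ⟨hx0, hx1, -, hy⟩ := hreg x hx
      exact ⟨hx0, hx1, hy⟩
    · obtain ⟨hx0, -, hF, -⟩ := hreg x hx
      exact hasDerivAt_hypergeometricRiccati_yThm2 hκ hr (hball x hx) hx0 hF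
  convert! hPVI using 1 <;> ring
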